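/- (Hard aggregation bound of Tsitsiklis and Van Roy) Suppose the aggregation probabilities are 0–1 valued, so the footprint sets S_y = { j : φ_{jy} = 1 }, y ∈ 𝒜, form a partition of {1,…,n}, and suppose that for each x ∈ 𝒜, d_{xi} > 0 implies i ∈ S_x. Let ε = max_{x∈𝒜} max_{ i,j ∈ S_x } |J*(i) − J*(j)|. Then for every x ∈ 𝒜 and every state i ∈ S_x, |J*(i) − r*_x| ≤ ε/(1−α). -/

import Mathlib

/-!
Let `T` be the Bellman operator, an `α`-contraction in the sup norm, let `J = T J`, and let `Φ r` be
the cost vector interpolated from the aggregate costs `r`. Since `r x` is an average of `T (Φ r) l`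
over states `l` in the footprint of `x`, for `i` in that footprint
`|J i - r x| ≤ max_l (|J i - J l| + |T J l - T (Φ r) l|) ≤ ε + α ‖J - Φ r‖`.
Averaging over the aggregate states `x` whose footprint contains `i` gives
`‖J - Φ r‖ ≤ ε + α ‖J - Φ r‖`, so `‖J - Φ r‖ ≤ ε / (1 - α)`, and hence
`|J i - r x| ≤ ε + α ε / (1 - α) = ε / (1 - α)`.
-/

open scoped NNReal

section Average

variable {ι κ : Type*} [Fintype ι]

theorem sum_smul_mem_of_mem_stdSimplex {𝕜 M : Type*} [Field 𝕜] [LinearOrder 𝕜]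
    [IsStrictOrderedRing 𝕜] [AddCommGroup M] [Module 𝕜 M] {s : Set M} (hs : Convex 𝕜 s)
    {w : ι → 𝕜} (hw : w ∈ stdSimplex 𝕜 ι) {v : ι → M} (hv : ∀ i, 0 < w i → v i ∈ s) :
    ∑ i, w i • v i ∈ s := by
  rw [← finsum_eq_sum_of_fintype]
  exact hs.finsum_mem hw.1 ((finsum_eq_sum_of_fintype w).trans hw.2)
    fun i hi ↦ hv i ((hw.1 i).lt_of_ne' hi)

/-- The vector whose `k`-th entry averages `v` with the weights `w k`. It is both the
disaggregation map `v ↦ (∑ i, d x i * v i)_x` and the aggregation map `r ↦ (∑ y, φ j y * r y)_j`. -/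
def average {M : Type*} [AddCommMonoid M] [Module ℝ M] (w : κ → ι → ℝ) (v : ι → M) : κ → M :=
  fun k ↦ ∑ i, w k i • v i

variable {E : Type*} [SeminormedAddCommGroup E] [NormedSpace ℝ E]

theorem dist_sum_smul_sum_smul_le {w : ι → ℝ} (hw : w ∈ stdSimplex ℝ ι) {v v' : ι → E} {c : ℝ}
    (hv : ∀ i, 0 < w i → dist (v i) (v' i) ≤ c) :
    dist (∑ i, w i • v i) (∑ i, w i • v' i) ≤ c := by
  simp only [dist_eq_norm, ← Finset.sum_sub_distrib, ← smul_sub, ← mem_closedBall_zero_iff] at hv ⊢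
  exact sum_smul_mem_of_mem_stdSimplex (convex_closedBall 0 c) hw hv

theorem dist_average_le {w : κ → ι → ℝ} {k : κ} (hw : w k ∈ stdSimplex ℝ ι) {v : ι → E} {a : E}
    {c : ℝ} (hv : ∀ i, 0 < w k i → dist a (v i) ≤ c) : dist a (average w v k) ≤ c := by
  rw [← Metric.mem_closedBall']
  exact sum_smul_mem_of_mem_stdSimplex (convex_closedBall a c) hw
    fun i hi ↦ Metric.mem_closedBall'.2 (hv i hi)

end Average

section Bellman

theorem abs_inf'_sub_inf'_le {C R : Type*} [AddCommGroup R] [LinearOrder R] [IsOrderedAddMonoid R]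
    {s : Finset C} (hs : s.Nonempty) {f h : C → R} {c : R} (hfh : ∀ u ∈ s, |f u - h u| ≤ c) :
    |s.inf' hs f - s.inf' hs h| ≤ c := by
  have inf'_sub_le {f h : C → R} (hfh : ∀ u ∈ s, f u - h u ≤ c) :
      s.inf' hs f - s.inf' hs h ≤ c := by
    obtain ⟨u, hu, h_eq⟩ := s.exists_mem_eq_inf' hs h
    rw [h_eq]
    exact (sub_le_sub_right (s.inf'_le f hu) _).trans (hfh u hu)
  simp only [abs_sub_le_iff] at hfh ⊢
  exact ⟨inf'_sub_le fun u hu ↦ (hfh u hu).1, inf'_sub_le fun u hu ↦ (hfh u hu).2⟩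

variable {ι C : Type*} [Fintype ι]

/-- The dynamic programming operator of the discounted decision problem with control sets `U`,
transition probabilities `p`, stage costs `g` and discount factor `α`; its fixed point is the
optimal cost vector. -/
noncomputable def bellmanOperator (U : ι → Finset C) (hU : ∀ i, (U i).Nonempty)
    (p g : ι → C → ι → ℝ) (α : ℝ≥0) (J : ι → ℝ) : ι → ℝ :=
  fun i ↦ (U i).inf' (hU i) fun u ↦ ∑ j, p i u j * (g i u j + α * J j)

theorem lipschitzWith_bellmanOperator {U : ι → Finset C} (hU : ∀ i, (U i).Nonempty)
    {p : ι → C → ι → ℝ} (hp : ∀ i, ∀ u ∈ U i, p i u ∈ stdSimplex ℝ ι) (g : ι → C → ι → ℝ)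
    (α : ℝ≥0) : LipschitzWith α (bellmanOperator U hU p g α) := by
  have stage_cost_dist_le (J J' : ι → ℝ) (c : ℝ) (j : ι) :
      dist (c + α * J j) (c + α * J' j) ≤ α * dist J J' := by
    rw [dist_add_left, Real.dist_eq, ← mul_sub, abs_mul, NNReal.abs_eq, ← Real.dist_eq]
    exact mul_le_mul_of_nonneg_left (dist_le_pi_dist J J' j) α.coe_nonneg
  refine LipschitzWith.of_dist_le_mul fun J J' ↦ (dist_pi_le_iff (by positivity)).2 fun i ↦
    abs_inf'_sub_inf'_le (hU i) fun u hu ↦ ?_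
  simp only [← Real.dist_eq, ← smul_eq_mul (p i u _)]
  exact dist_sum_smul_sum_smul_le (hp i u hu) fun j _ ↦ stage_cost_dist_le J J' (g i u j) j

end Bellman

section Aggregation

variable {ι A E : Type*} [Fintype ι] [Fintype A] [SeminormedAddCommGroup E] [NormedSpace ℝ E]
  {K : ℝ≥0} {T : (ι → E) → ι → E} {d : A → ι → ℝ} {φ : ι → A → ℝ} {J : ι → E} {r : A → E}
  {S : A → Set ι} {ε : ℝ}

theorem dist_le_add_mul_dist_average (hT : LipschitzWith K T) (hJ : Function.IsFixedPt T J)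
    {x : A} (hd : d x ∈ stdSimplex ℝ ι) (hr : average d (T (average φ r)) x = r x) {i : ι}
    (hε : ∀ l, 0 < d x l → dist (J i) (J l) ≤ ε) :
    dist (J i) (r x) ≤ ε + K * dist J (average φ r) := by
  rw [← hr]
  refine dist_average_le hd fun l hl ↦ ?_
  calc dist (J i) (T (average φ r) l)
      ≤ dist (J i) (J l) + dist (T J l) (T (average φ r) l) := by
        rw [hJ]; exact dist_triangle _ _ _
    _ ≤ ε + K * dist J (average φ r) :=
        add_le_add (hε l hl) ((dist_le_pi_dist _ _ l).trans (hT.dist_le_mul _ _))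

theorem hard_aggregation_error_bound_general (hT : LipschitzWith K T) (hK : K < 1)
    (hd : ∀ x, d x ∈ stdSimplex ℝ ι) (hφ : ∀ j, φ j ∈ stdSimplex ℝ A)
    (hJ : Function.IsFixedPt T J) (hr : Function.IsFixedPt (average d ∘ T ∘ average φ) r)
    (hdS : ∀ x i, 0 < d x i → i ∈ S x) (hφS : ∀ j y, 0 < φ j y → j ∈ S y)
    (hε : ∀ x, ∀ i ∈ S x, ∀ j ∈ S x, dist (J i) (J j) ≤ ε) (x : A) (i : ι) (hi : i ∈ S x) :
    dist (J i) (r x) ≤ ε / (1 - K) := by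
  have one_sub_pos : 0 < 1 - (K : ℝ) := sub_pos.2 (mod_cast hK)
  have footprint_bound {y : A} {j : ι} (hj : j ∈ S y) :
      dist (J j) (r y) ≤ ε + K * dist J (average φ r) :=
    dist_le_add_mul_dist_average hT hJ (hd y) (congrFun hr y)
      fun l hl ↦ hε y j hj l (hdS y l hl)
  have global_bound : dist J (average φ r) ≤ ε + K * dist J (average φ r) :=
    (dist_pi_le_iff (dist_nonneg.trans (footprint_bound hi))).2 fun j ↦
      dist_average_le (hφ j) fun y hy ↦ footprint_bound (hφS j y hy)
  have interpolation_error : dist J (average φ r) ≤ ε / (1 - K) := by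
    rw [le_div_iff₀ one_sub_pos]
    linarith
  calc dist (J i) (r x) ≤ ε + K * dist J (average φ r) := footprint_bound hi
    _ ≤ ε + K * (ε / (1 - K)) := by gcongr
    _ = ε / (1 - K) := by field_simp; ring

end Aggregation

/-- Hard aggregation bound of Tsitsiklis and Van Roy: if the aggregation
probabilities are 0–1 valued (so the footprint sets `S_y = {j : φ_{jy} = 1}`
partition the state space) and each aggregate state `x` disaggregates only within
its footprint `S_x`, then `|J*(i) − r*_x| ≤ ε/(1−α)` for every `x` and `i ∈ S_x`,
where `ε = max_x max_{i,j ∈ S_x} |J*(i) − J*(j)|`. -/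
theorem hard_aggregation_error_bound
    (n : ℕ) [NeZero n] (C A : Type) [Fintype A] [Nonempty A]
    (U : Fin n → Finset C) (hU : ∀ i, (U i).Nonempty)
    (α : ℝ) (hα0 : 0 < α) (hα1 : α < 1)
    (p g : Fin n → C → Fin n → ℝ)
    (hp : ∀ i, ∀ u ∈ U i, ∀ j, 0 ≤ p i u j)
    (hp1 : ∀ i, ∀ u ∈ U i, ∑ j, p i u j = 1)
    (d : A → Fin n → ℝ) (hd : ∀ x i, 0 ≤ d x i) (hd1 : ∀ x, ∑ i, d x i = 1)
    (φ : Fin n → A → ℝ) (hφ : ∀ j y, 0 ≤ φ j y) (hφ1 : ∀ j, ∑ y, φ j y = 1)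
    -- hard aggregation: the aggregation probabilities are 0–1 valued
    (hhard : ∀ j y, φ j y = 0 ∨ φ j y = 1)
    -- `J*` is the optimal cost vector of the original problem
    (Jstar : Fin n → ℝ)
    (hJstar : ∀ i, Jstar i = (U i).inf' (hU i)
      (fun u => ∑ j, p i u j * (g i u j + α * Jstar j)))
    -- `r*` is the (unique) fixed point of the aggregation operator `H`
    (rstar : A → ℝ)
    (hfix : ∀ x, rstar x = ∑ i, d x i * (U i).inf' (hU i)
      (fun u => ∑ j, p i u j * (g i u j + α * ∑ y, φ j y * rstar y)))
    -- each aggregate state disaggregates only within its footprint `S_x`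
    (hcond : ∀ x i, 0 < d x i → φ i x = 1)
    -- `ε = max_{x∈𝒜} max_{i,j ∈ S_x} |J*(i) − J*(j)|`
    (ε : ℝ)
    (hε : ε = Finset.univ.sup' Finset.univ_nonempty
      (fun q : A × Fin n × Fin n =>
        if φ q.2.1 q.1 = 1 ∧ φ q.2.2 q.1 = 1 then |Jstar q.2.1 - Jstar q.2.2| else 0)) :
    ∀ (x : A) (i : Fin n), φ i x = 1 → |Jstar i - rstar x| ≤ ε / (1 - α) := by
  lift α to ℝ≥0 using hα0.le
  have bellman_lipschitz : LipschitzWith α (bellmanOperator U hU p g α) :=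
    lipschitzWith_bellmanOperator hU (fun i u hu ↦ ⟨hp i u hu, hp1 i u hu⟩) g α
  have footprint_diam (x : A) (i : Fin n) (hi : φ i x = 1) (j : Fin n) (hj : φ j x = 1) :
      dist (Jstar i) (Jstar j) ≤ ε := by
    rw [hε, Real.dist_eq]
    exact Finset.le_sup'_of_le _ (Finset.mem_univ (x, i, j)) (by simp [hi, hj])
  exact hard_aggregation_error_bound_general (S := fun x ↦ {i | φ i x = 1}) bellman_lipschitz
    (mod_cast hα1) (fun x ↦ ⟨hd x, hd1 x⟩) (fun j ↦ ⟨hφ j, hφ1 j⟩) (funext fun i ↦ (hJstar i).symm)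
    (funext fun x ↦ (hfix x).symm) hcond (fun j y hpos ↦ (hhard j y).resolve_left hpos.ne')
    footprint_diam
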